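/- arXiv:2602.21063 — 2 statements merged into one kernel-verified Lean document; each statement's English description precedes it below -/
import Mathlib

section
/- Let b ∈ GL_n(E) be an invertible upper-triangular matrix and let 1 ≤ j < i ≤ n. Then there exist scalars x_{j+1}, …, x_i ∈ E such that, setting a := e^{i,j} + Σ_{l=j+1}^{i} x_l e^{i,l} (a matrix supported in row i and columns j through i, hence lower-triangular with (i,j)-entry 1), the conjugate b a b^{−1} stabilizes every step of the σ-permuted complete flag for σ the transposition exchanging i and j; in particular a ∈ Ad_{b^{−1} P_σ}(𝔟), where P_σ is the permutation matrix of σ and 𝔟 the upper-triangular matrices. (This is the key elementary-matrix claim in the proof of the infinite-fern theorem in the crystabelline case, where all blocks have size one.) -/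
open Matrix

/-- The `E`-subspace of `n × n` matrices supported on the entries `(i, j)` where `P i j` holds. -/
def entrySub (E : Type*) [Field E] (n : ℕ) (P : Fin n → Fin n → Prop) :
    Submodule E (Matrix (Fin n) (Fin n) E) where
  carrier := {M | ∀ i j, ¬ P i j → M i j = 0}
  add_mem' := by
    intro M N hM hN i j hij
    simp only [Matrix.add_apply, hM i j hij, hN i j hij, add_zero]
  zero_mem' := by
    intro i j _
    simp
  smul_mem' := by
    intro c M hM i j hij
    simp only [Matrix.smul_apply, hM i j hij, smul_zero]

/-- The Borel subalgebra `𝔟` of upper-triangular matrices. -/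
def upperTri (E : Type*) [Field E] (n : ℕ) : Submodule E (Matrix (Fin n) (Fin n) E) :=
  entrySub E n fun i j => i ≤ j

/-- `Ad_g(W) = g W g⁻¹`. -/
noncomputable def adConj {E : Type*} [Field E] {n : ℕ} (g : Matrix (Fin n) (Fin n) E)
    (W : Submodule E (Matrix (Fin n) (Fin n) E)) : Submodule E (Matrix (Fin n) (Fin n) E) :=
  W.map ((LinearMap.mulLeft E g).comp (LinearMap.mulRight E g⁻¹))

/-- The permutation matrix `P_σ` of a permutation `σ`, sending `e_q` to `e_{σ q}`. -/
def permMat (E : Type*) [Field E] {n : ℕ} (σ : Equiv.Perm (Fin n)) :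
    Matrix (Fin n) (Fin n) E :=
  Matrix.of fun p q => if p = σ q then 1 else 0

/-- The `k`-th step `span(e_{σ(1)}, …, e_{σ(k)})` of the `σ`-permuted complete flag. -/
def permFlag (E : Type*) [Field E] {n : ℕ} (σ : Equiv.Perm (Fin n)) (k : ℕ) :
    Submodule E (Fin n → E) :=
  Submodule.span E {v | ∃ m : Fin n, (m : ℕ) < k ∧ v = Pi.single (σ m) 1}

/-!
Let `w` be the `j`-th row of `b`, scaled so that `w j = 1` and cut off after column `i`; the matrix
sought is the rank-one matrix `A = e_i ⊗ w`. Then `b A b⁻¹ = (b e_i) ⊗ (w b⁻¹)`. The first factor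
lives in the rows `≤ i`. Without the cut-off the second factor would be a multiple of the `j`-th
coordinate row, and since `b⁻¹` is upper triangular the cut-off changes it only in columns `> i`.
Exchanging `i` and `j` therefore makes `b A b⁻¹` upper triangular, which is what both conclusions
say.
-/

theorem row_vecMul_nonsing_inv {R m : Type*} [CommRing R] [Fintype m] [DecidableEq m]
    {b : Matrix m m R} (hdet : IsUnit b.det) (j : m) : b j ᵥ* b⁻¹ = Pi.single j 1 := by
  rw [← mul_apply_eq_vecMul, mul_nonsing_inv b hdet]
  exact funext fun _ => one_eq_pi_single

section UpperTriangular

variable {R m : Type*} [LinearOrder m]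

theorem isUpperTriangular_submatrix_swap_vecMulVec [MulZeroClass R] {u v : m → R} {i j : m}
    (hji : j ≤ i) (hu : ∀ p > i, u p = 0) (hv : ∀ q ≤ i, q ≠ j → v q = 0) :
    ((vecMulVec u v).submatrix (Equiv.swap i j) (Equiv.swap i j)).IsUpperTriangular := by
  intro p q (hqp : q < p)
  rw [submatrix_apply, vecMulVec_apply]
  rcases lt_or_ge i p with hip | hpi
  · rw [Equiv.swap_apply_of_ne_of_ne hip.ne' (hji.trans_lt hip).ne', hu p hip, zero_mul]
  · have hqi : q < i := hqp.trans_le hpi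
    have hle : Equiv.swap i j q ≤ i := by
      rcases eq_or_ne q j with rfl | hqj
      · rw [Equiv.swap_apply_right]
      · rw [Equiv.swap_apply_of_ne_of_ne hqi.ne hqj]
        exact hqi.le
    have hne : Equiv.swap i j q ≠ j := by
      rw [Ne, Equiv.swap_apply_eq_iff, Equiv.swap_apply_right]
      exact hqi.ne
    rw [hv _ hle hne, mul_zero]

theorem indicator_Iic_vecMul_apply [NonUnitalNonAssocSemiring R] [Fintype m] {T : Matrix m m R}
    (hT : T.IsUpperTriangular) (w : m → R) {i q : m} (hq : q ≤ i) :
    ((Set.Iic i).indicator w ᵥ* T) q = (w ᵥ* T) q := by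
  refine Finset.sum_congr rfl fun l _ => ?_
  change (Set.Iic i).indicator w l * T l q = w l * T l q
  rcases le_or_gt l i with hl | hl
  · rw [Set.indicator_of_mem (Set.mem_Iic.mpr hl)]
  · rw [hT (hq.trans_lt hl), mul_zero, mul_zero]

theorem isUnit_apply_self_of_isUpperTriangular [CommRing R] [Fintype m] {b : Matrix m m R}
    (hdet : IsUnit b.det) (hb : b.IsUpperTriangular) (j : m) : IsUnit (b j j) := by
  rw [det_of_isUpperTriangular hb, IsUnit.prod_univ_iff] at hdet
  exact hdet j

theorem isUpperTriangular_submatrix_swap_conj_vecMulVec [CommRing R] [Fintype m]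
    {b : Matrix m m R} (hdet : IsUnit b.det) (hb : b.IsUpperTriangular) {i j : m} (hji : j ≤ i)
    (c : R) :
    ((b * vecMulVec (Pi.single i 1) ((Set.Iic i).indicator (c • b j)) * b⁻¹).submatrix
      (Equiv.swap i j) (Equiv.swap i j)).IsUpperTriangular := by
  have hinv : b⁻¹.IsUpperTriangular := by
    have := invertibleOfIsUnitDet b hdet
    exact blockTriangular_inv_of_blockTriangular hb
  rw [mul_vecMulVec, vecMulVec_mul, mulVec_single_one]
  refine isUpperTriangular_submatrix_swap_vecMulVec hji (fun p hp => hb hp) fun q hq hqj => ?_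
  rw [indicator_Iic_vecMul_apply hinv _ hq, smul_vecMul, row_vecMul_nonsing_inv hdet,
    Pi.smul_apply, Pi.single_eq_of_ne hqj, smul_zero]

end UpperTriangular

theorem vecMulVec_single_one_indicator {R m n : Type*} [NonAssocSemiring R] [DecidableEq m]
    [DecidableEq n] (i : m) (s : Finset n) (w : n → R) :
    vecMulVec (Pi.single i 1) ((s : Set n).indicator w) = ∑ l ∈ s, w l • single i l 1 := by
  ext p q
  obtain rfl | hp := eq_or_ne p i
  · simp [Matrix.sum_apply, vecMulVec_apply, single_apply, Set.indicator_apply]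
  · simp [Matrix.sum_apply, vecMulVec_apply, hp, hp.symm]

theorem vecMulVec_single_one_indicator_Iic {R m : Type*} [NonAssocSemiring R] [LinearOrder m]
    [LocallyFiniteOrder m] {w : m → R} {i j : m} (hji : j ≤ i) (hw : ∀ l < j, w l = 0)
    (hwj : w j = 1) :
    vecMulVec (Pi.single i 1) ((Set.Iic i).indicator w) =
      single i j 1 + ∑ l ∈ Finset.Ioc j i, w l • single i l 1 := by
  have hcut : (Set.Iic i).indicator w = (Finset.Icc j i : Set m).indicator w := by
    have hIci : (Set.Ici j).indicator w = w :=
      Set.indicator_eq_self.mpr fun l hl => not_lt.mp (mt (hw l) hl)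
    rw [Finset.coe_Icc, ← Set.Ici_inter_Iic, Set.inter_comm, ← Set.indicator_indicator, hIci]
  rw [hcut, vecMulVec_single_one_indicator, ← Finset.add_sum_Ioc_eq_sum_Icc hji, hwj,
    smul_single, smul_eq_mul, one_mul]

section Flag

variable {E : Type*} [Field E] {n : ℕ}

theorem mem_upperTri {M : Matrix (Fin n) (Fin n) E} : M ∈ upperTri E n ↔ M.IsUpperTriangular :=
  forall₂_congr fun _ _ => imp_congr_left not_le

theorem mem_permFlag {σ : Equiv.Perm (Fin n)} {k : ℕ} {v : Fin n → E} :
    v ∈ permFlag E σ k ↔ ∀ m : Fin n, k ≤ m → v (σ m) = 0 := by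
  have himage : {v : Fin n → E | ∃ m : Fin n, (m : ℕ) < k ∧ v = Pi.single (σ m) 1} =
      Pi.basisFun E (Fin n) '' (σ '' {m | (m : ℕ) < k}) := by
    rw [Set.image_image]
    ext v
    simp only [Pi.basisFun_apply, Set.mem_image, Set.mem_ofPred_eq, eq_comm]
  rw [permFlag, himage, Module.Basis.mem_span_image, Set.subset_def, σ.surjective.forall]
  simp [not_imp_comm]

theorem mulVec_mem_permFlag {σ : Equiv.Perm (Fin n)} {C : Matrix (Fin n) (Fin n) E}
    (hC : (C.submatrix σ σ).IsUpperTriangular) {k : ℕ} {v : Fin n → E}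
    (hv : v ∈ permFlag E σ k) : C *ᵥ v ∈ permFlag E σ k := by
  rw [mem_permFlag] at hv ⊢
  intro m hm
  rw [mulVec, dotProduct, ← Equiv.sum_comp σ]
  refine Finset.sum_eq_zero fun l _ => ?_
  rcases lt_or_ge l m with hlm | hml
  · rw [show C (σ m) (σ l) = 0 from hC hlm, zero_mul]
  · rw [hv l (hm.trans hml), mul_zero]

theorem mem_adConj {g : Matrix (Fin n) (Fin n) E} (hg : IsUnit g.det)
    {W : Submodule E (Matrix (Fin n) (Fin n) E)} {A : Matrix (Fin n) (Fin n) E} :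
    A ∈ adConj g W ↔ g⁻¹ * A * g ∈ W := by
  constructor
  · rintro ⟨M, hM, rfl⟩
    change g⁻¹ * (g * (M * g⁻¹)) * g ∈ W
    rwa [nonsing_inv_mul_cancel_left _ _ hg, nonsing_inv_mul_cancel_right _ _ hg]
  · refine fun h => ⟨_, h, ?_⟩
    change g * (g⁻¹ * A * g * g⁻¹) = A
    rw [mul_nonsing_inv_cancel_right _ _ hg, mul_nonsing_inv_cancel_left _ _ hg]

theorem permMat_eq_permMatrix_inv (σ : Equiv.Perm (Fin n)) :
    permMat E σ = σ⁻¹.permMatrix E := by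
  ext p q
  simp [permMat, PEquiv.toMatrix_apply, Equiv.toPEquiv_apply, Equiv.eq_symm_apply, eq_comm]

theorem isUnit_det_permMat (σ : Equiv.Perm (Fin n)) : IsUnit (permMat E σ).det := by
  rw [permMat_eq_permMatrix_inv, det_permutation]
  exact (Equiv.Perm.sign σ⁻¹).isUnit.map (Int.castRingHom E)

theorem inv_permMat_mul_mul_permMat (σ : Equiv.Perm (Fin n)) (C : Matrix (Fin n) (Fin n) E) :
    (permMat E σ)⁻¹ * C * permMat E σ = C.submatrix σ σ := by
  have hinv : (permMat E σ)⁻¹ = σ.permMatrix E := by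
    apply inv_eq_left_inv
    rw [permMat_eq_permMatrix_inv, ← permMatrix_mul, inv_mul_cancel, permMatrix_one]
  rw [hinv, permMat_eq_permMatrix_inv, PEquiv.toMatrix_toPEquiv_mul, PEquiv.mul_toMatrix_toPEquiv,
    submatrix_submatrix]
  rfl

theorem mem_adConj_inv_mul_permMat {b : Matrix (Fin n) (Fin n) E} (hdet : IsUnit b.det)
    {σ : Equiv.Perm (Fin n)} {W : Submodule E (Matrix (Fin n) (Fin n) E)}
    {A : Matrix (Fin n) (Fin n) E} :
    A ∈ adConj (b⁻¹ * permMat E σ) W ↔ (b * A * b⁻¹).submatrix σ σ ∈ W := by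
  have hg : IsUnit (b⁻¹ * permMat E σ).det := by
    rw [det_mul]
    exact (isUnit_nonsing_inv_det b hdet).mul (isUnit_det_permMat σ)
  rw [mem_adConj hg, ← inv_permMat_mul_mul_permMat, Matrix.mul_inv_rev,
    nonsing_inv_nonsing_inv b hdet]
  simp only [Matrix.mul_assoc]

end Flag

/-- Let `b ∈ GL_n(E)` be an invertible upper-triangular matrix and let
`1 ≤ j < i ≤ n`.  Then there exist scalars `x_{j+1}, …, x_i ∈ E` such that, setting
`A := e^{i,j} + Σ_{l=j+1}^{i} x_l e^{i,l}` (a matrix supported in row `i` and columns `j` through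
`i`, hence lower-triangular with `(i,j)`-entry `1`), the conjugate `b A b⁻¹` stabilizes every step
of the `σ`-permuted complete flag for `σ` the transposition exchanging `i` and `j`; in particular
`A ∈ Ad_{b⁻¹ P_σ}(𝔟)`, where `P_σ` is the permutation matrix of `σ` and `𝔟` the upper-triangular
matrices. -/
theorem statement_2 (E : Type*) [Field E] (n : ℕ) (b : Matrix (Fin n) (Fin n) E)
    (hbunit : IsUnit b.det) (hbupper : b ∈ upperTri E n)
    (i j : Fin n) (hij : j < i) :
    ∃ (x : Fin n → E) (A : Matrix (Fin n) (Fin n) E),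
      A = Matrix.single i j 1 +
            ∑ l ∈ Finset.Ioc j i, x l • Matrix.single i l 1 ∧
      (∀ k : ℕ, ∀ v ∈ permFlag E (Equiv.swap i j) k,
        (b * A * b⁻¹).mulVec v ∈ permFlag E (Equiv.swap i j) k) ∧
      A ∈ adConj (b⁻¹ * permMat E (Equiv.swap i j)) (upperTri E n) := by
  have hb : b.IsUpperTriangular := mem_upperTri.mp hbupper
  have hbjj : b j j ≠ 0 := (isUnit_apply_self_of_isUpperTriangular hbunit hb j).ne_zero
  have hform := vecMulVec_single_one_indicator_Iic (w := (b j j)⁻¹ • b j) hij.le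
    (fun l hl => by rw [Pi.smul_apply, hb hl, smul_zero]) (inv_mul_cancel₀ hbjj)
  have hconj := isUpperTriangular_submatrix_swap_conj_vecMulVec hbunit hb hij.le (b j j)⁻¹
  exact ⟨(b j j)⁻¹ • b j, _, hform, fun _ _ hv => mulVec_mem_permFlag hconj hv,
    (mem_adConj_inv_mul_permMat hbunit).mpr (mem_upperTri.mpr hconj)⟩
end

section
/- Suppose g ∈ GL_n(E) is non-critical, meaning that for every permutation u of {1,…,s} there exist a matrix h_u ∈ GL_n(E) stabilizing every subspace F^u_a (1 ≤ a ≤ s) and an invertible upper-triangular matrix β_u with g = h_u w_0 β_u. Then Σ_{u ∈ S_s} Σ_{a=1}^{s} (τ^u_a ∩ Ad_g(𝔟)) = Σ_{u ∈ S_s} (τ^u ∩ Ad_g(𝔟)) as E-subspaces of M_n(E). (This is the identification Hom^♭_{Fil}(D_σ, D_σ) ≅ Ad_{g_σ}(𝔟_σ)^∘_{S_0} := Σ_{u∈𝒲_s} Ad_u(τ_{S_0,σ}) ∩ Ad_{g_σ}(𝔟_σ): the envelope of the two-step pieces τ^u_a equals the envelope of the full pieces τ^u.) -/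
open Matrix

/-- The antidiagonal permutation matrix `w₀`, with `(w₀)_{m, n+1−m} = 1`. -/
def w0Mat (E : Type*) [Field E] (n : ℕ) : Matrix (Fin n) (Fin n) E :=
  Matrix.of fun i j => if j = i.rev then 1 else 0

/-- The flag `F^u_• : a ↦ W_{u⁻¹(1)} ⊕ ⋯ ⊕ W_{u⁻¹(a)}`, where `W_c = span(e_m : β m = c)`;
concretely `F^u_a` is the span of the standard basis vectors `e_m` with `u (β m) < a` (blocks are
`0`-indexed, so this consists of the first `a` blocks in the `u`-order). -/
def flagF (E : Type*) [Field E] {n s : ℕ} (β : Fin n → Fin s) (u : Equiv.Perm (Fin s))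
    (a : ℕ) : Submodule E (Fin n → E) :=
  Submodule.span E {v | ∃ m : Fin n, ((u (β m) : ℕ) < a) ∧ v = Pi.single m 1}

/-- The subalgebra of matrices stabilizing a subspace `F ⊆ E^n`. -/
def stabSub (E : Type*) [Field E] {n : ℕ} (F : Submodule E (Fin n → E)) :
    Submodule E (Matrix (Fin n) (Fin n) E) where
  carrier := {M | ∀ v ∈ F, M.mulVec v ∈ F}
  add_mem' := by
    intro M N hM hN v hv
    rw [Matrix.add_mulVec]
    exact F.add_mem (hM v hv) (hN v hv)
  zero_mem' := by
    intro v hv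
    rw [Matrix.zero_mulVec]
    exact F.zero_mem
  smul_mem' := by
    intro c M hM v hv
    rw [Matrix.smul_mulVec]
    exact F.smul_mem c (hM v hv)

/-- `𝔭^u = {M ∈ M_n(E) : M F^u_a ⊆ F^u_a for all a}`, the stabilizer of the flag `F^u_•`. -/
def flagParab (E : Type*) [Field E] {n s : ℕ} (β : Fin n → Fin s) (u : Equiv.Perm (Fin s)) :
    Submodule E (Matrix (Fin n) (Fin n) E) :=
  ⨅ a : ℕ, stabSub E (flagF E β u a)

/-- The matrices `M` such that the map induced by `M` from `F` to `E^n/F'` is a scalar, i.e.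
`∃ c, ∀ v ∈ F, M v − c • v ∈ F'`. -/
def relScalar (E : Type*) [Field E] {n : ℕ} (F F' : Submodule E (Fin n → E)) :
    Submodule E (Matrix (Fin n) (Fin n) E) where
  carrier := {M | ∃ c : E, ∀ v ∈ F, M.mulVec v - c • v ∈ F'}
  zero_mem' := ⟨0, fun v _ => by
    simp [Matrix.zero_mulVec]⟩
  add_mem' := by
    rintro M N ⟨c, hc⟩ ⟨d, hd⟩
    refine ⟨c + d, fun v hv => ?_⟩
    have hkey : (M + N).mulVec v - (c + d) • v
        = (M.mulVec v - c • v) + (N.mulVec v - d • v) := by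
      rw [Matrix.add_mulVec, add_smul]
      abel
    rw [hkey]
    exact F'.add_mem (hc v hv) (hd v hv)
  smul_mem' := by
    rintro t M ⟨c, hc⟩
    refine ⟨t * c, fun v hv => ?_⟩
    have hkey : (t • M).mulVec v - (t * c) • v = t • (M.mulVec v - c • v) := by
      rw [Matrix.smul_mulVec, SemigroupAction.mul_smul, smul_sub]
    rw [hkey]
    exact F'.smul_mem t (hc v hv)

/-- `τ^u_a = {M ∈ M_n(E) : M F^u_a ⊆ F^u_a, the restriction of M to F^u_a is a scalar, and the
endomorphism induced by M on E^n/F^u_a is a scalar}`. -/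
def tauStep (E : Type*) [Field E] {n s : ℕ} (β : Fin n → Fin s) (u : Equiv.Perm (Fin s))
    (a : ℕ) : Submodule E (Matrix (Fin n) (Fin n) E) :=
  stabSub E (flagF E β u a) ⊓ relScalar E (flagF E β u a) ⊥ ⊓ relScalar E ⊤ (flagF E β u a)

/-- `τ^u = {M ∈ 𝔭^u : for every 1 ≤ a ≤ s the endomorphism induced by M on F^u_a/F^u_{a−1} is a
scalar}`. -/
def tauFull (E : Type*) [Field E] {n s : ℕ} (β : Fin n → Fin s) (u : Equiv.Perm (Fin s)) :
    Submodule E (Matrix (Fin n) (Fin n) E) :=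
  flagParab E β u ⊓
    ⨅ a : Fin s, relScalar E (flagF E β u ((a : ℕ) + 1)) (flagF E β u (a : ℕ))

/-!
Let `P_c` be the projection of `E^n` onto the block `W_c`. For `M ∈ τ^u` the diagonal block
`P_c M P_c` is a scalar, so `P_c M` lies in `τ^v_1` for any `v` which puts the block `c` first.
As `M = ∑ P_c M`, it remains to see that left multiplication by `P_c` preserves `Ad_g(𝔟)`, for which
`P_c ∈ Ad_g(𝔟)` suffices: the flag `gE_•` has to be stable under all `P_c`.

If `g = h_c w B_c`, where `h_c` stabilizes `W_c`, then the `j`-th column of `g B_c⁻¹ = h_c w` lies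
in `W_c` whenever `w` sends `e_j` into `W_c`. Picking the `j`-th column of `B_c⁻¹` for this `c`
gives an invertible upper-triangular `T` such that every column of `g T` lies in a single block,
that is, a basis adapted to `gE_•` which consists of eigenvectors of every `P_c`.
-/

section Triangular

theorem isUpperTriangular_of_columns {R ι : Type*} [Zero R] [LT ι] {f : ι → Matrix ι ι R}
    (hf : ∀ j, (f j).IsUpperTriangular) : (of fun i j ↦ f j i j).IsUpperTriangular :=
  fun _ j hij ↦ hf j hij

variable {R ι κ : Type*} [CommRing R] [Fintype ι] [LinearOrder ι]

theorem isUnit_det_iff_of_isUpperTriangular {M : Matrix ι ι R} (hM : M.IsUpperTriangular) :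
    IsUnit M.det ↔ ∀ i, IsUnit (M i i) := by
  rw [det_of_isUpperTriangular hM, IsUnit.prod_univ_iff]

theorem isUpperTriangular_inv {M : Matrix ι ι R} (hM : M.IsUpperTriangular)
    (hdet : IsUnit M.det) : M⁻¹.IsUpperTriangular :=
  have := M.invertibleOfIsUnitDet hdet
  blockTriangular_inv_of_blockTriangular hM

theorem isUnit_det_of_columns {f : ι → Matrix ι ι R} (hf : ∀ j, (f j).IsUpperTriangular)
    (hdet : ∀ j, IsUnit (f j).det) : IsUnit (of fun i j ↦ f j i j).det :=
  (isUnit_det_iff_of_isUpperTriangular (isUpperTriangular_of_columns hf)).mpr fun j ↦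
    (isUnit_det_iff_of_isUpperTriangular (hf j)).mp (hdet j) j

theorem exists_isUpperTriangular_mul_homogeneous_columns (β : ι → κ) (σ : Equiv.Perm ι)
    {g : Matrix ι ι R} (hg : IsUnit g.det)
    (hfac : ∀ c, ∃ h B : Matrix ι ι R, (∀ i j, β i ≠ c → β j = c → h i j = 0) ∧
      B.IsUpperTriangular ∧ g = h * σ.permMatrix R * B) :
    ∃ T : Matrix ι ι R, T.IsUpperTriangular ∧ IsUnit T.det ∧
      ∀ i j, β i ≠ β (σ.symm j) → (g * T) i j = 0 := by
  choose h B hh hB hfac using hfac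
  have hBdet (c : κ) : IsUnit (B c).det := by
    rw [hfac c, det_mul] at hg
    exact isUnit_of_mul_isUnit_right hg
  have hBinv (c : κ) : (B c)⁻¹.IsUpperTriangular :=
    isUpperTriangular_inv (hB c) (hBdet c)
  refine ⟨of fun i j ↦ (B (β (σ.symm j)))⁻¹ i j, isUpperTriangular_of_columns fun j ↦ hBinv _,
    isUnit_det_of_columns (fun j ↦ hBinv _) fun j ↦ isUnit_nonsing_inv_det _ (hBdet _),
    fun i j hij ↦ ?_⟩
  calc (g * of fun i j ↦ (B (β (σ.symm j)))⁻¹ i j) i j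
      = (g * (B (β (σ.symm j)))⁻¹) i j := rfl
    _ = (h (β (σ.symm j)) * σ.permMatrix R) i j := by
      conv_lhs => rw [hfac (β (σ.symm j))]
      rw [mul_nonsing_inv_cancel_right _ _ (hBdet _)]
    _ = h (β (σ.symm j)) i (σ.symm j) := by
      rw [PEquiv.mul_toMatrix_toPEquiv, submatrix_apply, id]
    _ = 0 := hh _ _ _ hij rfl

end Triangular

section BlockProj

variable (R : Type*) {ι κ : Type*} [Semiring R] [DecidableEq ι] [DecidableEq κ]

/-- The projection `P_c` onto the block `W_c = span(e_i : β i = c)` along the other blocks. -/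
def blockProj (β : ι → κ) (c : κ) : Matrix ι ι R :=
  diagonal fun i ↦ if β i = c then 1 else 0

variable {R}

theorem sum_blockProj [Fintype κ] (β : ι → κ) : ∑ c, blockProj R β c = 1 := by
  ext i j
  by_cases hij : i = j <;> simp [blockProj, Matrix.sum_apply, one_apply, hij]

variable [Fintype ι]

theorem blockProj_mul_self (β : ι → κ) (c : κ) :
    blockProj R β c * blockProj R β c = blockProj R β c := by
  simp only [blockProj, diagonal_mul_diagonal, mul_ite, mul_one, mul_zero, ← ite_and, and_self]

theorem blockProj_mulVec_eq_self_iff {β : ι → κ} {c : κ} {v : ι → R} :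
    blockProj R β c *ᵥ v = v ↔ ∀ i, β i ≠ c → v i = 0 := by
  simp only [funext_iff, blockProj, mulVec_diagonal, ite_mul, one_mul, zero_mul, ite_eq_left_iff,
    eq_comm (a := (0 : R)), ne_eq]

theorem blockProj_mul_eq_mul_blockProj {β γ : ι → κ} {A : Matrix ι ι R}
    (hA : ∀ i j, β i ≠ γ j → A i j = 0) (c : κ) :
    blockProj R β c * A = A * blockProj R γ c := by
  ext i j
  rw [blockProj, blockProj, diagonal_mul, mul_diagonal]
  by_cases hij : β i = γ j
  · rw [hij, ite_mul, mul_ite, one_mul, zero_mul, mul_one, mul_zero]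
  · rw [hA i j hij, mul_zero, zero_mul]

end BlockProj

section Adjoint

variable {E : Type*} [Field E] {n : ℕ} {g M N : Matrix (Fin n) (Fin n) E}

theorem mem_upperTri_iff : M ∈ upperTri E n ↔ M.IsUpperTriangular :=
  forall₂_congr fun _ _ ↦ by rw [not_le]; rfl

theorem mem_adConj_iff (hg : IsUnit g.det) {W : Submodule E (Matrix (Fin n) (Fin n) E)} :
    M ∈ adConj g W ↔ g⁻¹ * M * g ∈ W := by
  constructor
  · rintro ⟨N, hN, rfl⟩
    have hcancel : g⁻¹ * (g * (N * g⁻¹)) * g = N := by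
      rw [nonsing_inv_mul_cancel_left _ _ hg, nonsing_inv_mul_cancel_right _ _ hg]
    exact hcancel.symm ▸ hN
  · refine fun hM ↦ ⟨_, hM, ?_⟩
    change g * (g⁻¹ * M * g * g⁻¹) = M
    rw [mul_nonsing_inv_cancel_right _ _ hg, mul_nonsing_inv_cancel_left _ _ hg]

theorem mul_mem_adConj_upperTri (hg : IsUnit g.det) (hM : M ∈ adConj g (upperTri E n))
    (hN : N ∈ adConj g (upperTri E n)) : M * N ∈ adConj g (upperTri E n) := by
  simp only [mem_adConj_iff hg, mem_upperTri_iff] at hM hN ⊢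
  have hMN : g⁻¹ * (M * N) * g = (g⁻¹ * M * g) * (g⁻¹ * N * g) := by
    simp only [Matrix.mul_assoc, mul_nonsing_inv_cancel_left _ _ hg]
  exact hMN ▸ hM.mul hN

theorem blockProj_mem_adConj_upperTri {κ : Type*} [DecidableEq κ] {β γ : Fin n → κ}
    {T : Matrix (Fin n) (Fin n) E} (hg : IsUnit g.det) (hT : T.IsUpperTriangular)
    (hTdet : IsUnit T.det) (hgT : ∀ i j, β i ≠ γ j → (g * T) i j = 0) (c : κ) :
    blockProj E β c ∈ adConj g (upperTri E n) := by
  rw [mem_adConj_iff hg, mem_upperTri_iff]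
  have hconj : g⁻¹ * blockProj E β c * g = T * blockProj E γ c * T⁻¹ := by
    calc g⁻¹ * blockProj E β c * g
      _ = g⁻¹ * (blockProj E β c * (g * T)) * T⁻¹ := by
          simp only [← Matrix.mul_assoc, mul_nonsing_inv_cancel_right _ _ hTdet]
      _ = T * blockProj E γ c * T⁻¹ := by
          rw [blockProj_mul_eq_mul_blockProj hgT, Matrix.mul_assoc g,
            nonsing_inv_mul_cancel_left _ _ hg]
  rw [hconj]
  exact (hT.mul (blockTriangular_diagonal _)).mul (isUpperTriangular_inv hT hTdet)

theorem w0Mat_eq_permMatrix : w0Mat E n = Fin.revPerm.permMatrix E := by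
  ext i j
  simp [w0Mat, eq_comm]

theorem isUnit_det_w0Mat : IsUnit (w0Mat E n).det := by
  rw [w0Mat_eq_permMatrix, det_permutation]
  exact (Units.isUnit _).map (Int.castRingHom E)

end Adjoint

section Flag

variable {E : Type*} [Field E] {n s : ℕ} {β : Fin n → Fin s} {u : Equiv.Perm (Fin s)} {c : Fin s}
  {M : Matrix (Fin n) (Fin n) E}

theorem mem_flagF_iff {a : ℕ} {v : Fin n → E} :
    v ∈ flagF E β u a ↔ ∀ i, a ≤ (u (β i) : ℕ) → v i = 0 := by
  have hspan : flagF E β u a =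
      Submodule.span E (Pi.basisFun E (Fin n) '' {i | (u (β i) : ℕ) < a}) := by
    rw [flagF]
    congr 1
    ext v
    simp [eq_comm]
  rw [hspan, Module.Basis.mem_span_image]
  simp only [Set.subset_def, Finset.mem_coe, Finsupp.mem_support_iff, Pi.basisFun_repr,
    Set.mem_ofPred_eq]
  exact forall_congr' fun i ↦ by rw [← not_lt, not_imp_comm]

theorem flagF_mono : Monotone (flagF E β u) := fun _ _ hab ↦
  Submodule.span_mono fun _ ⟨i, hi, hv⟩ ↦ ⟨i, hi.trans_le hab, hv⟩

theorem tauStep_le_tauFull (a : ℕ) : tauStep E β u a ≤ tauFull E β u := by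
  rintro M ⟨⟨-, t, ht⟩, d, hd⟩
  have hsub {v} (hv : v ∈ flagF E β u a) : M *ᵥ v = t • v := sub_eq_zero.mp (ht v hv)
  have hquot {b : ℕ} (hab : a ≤ b) (v) : M *ᵥ v - d • v ∈ flagF E β u b :=
    flagF_mono hab (hd v trivial)
  simp only [tauFull, flagParab, Submodule.mem_inf, Submodule.mem_iInf]
  refine ⟨fun b v hv ↦ ?_, fun b ↦ ?_⟩
  · rcases le_total b a with hba | hab
    · exact hsub (flagF_mono hba hv) ▸ Submodule.smul_mem _ t hv
    · exact (Submodule.sub_mem_iff_left _ (Submodule.smul_mem _ d hv)).mp (hquot hab v)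
  · rcases lt_or_ge (b : ℕ) a with hba | hab
    · exact ⟨t, fun v hv ↦ by simp [hsub (flagF_mono (Nat.succ_le_of_lt hba) hv)]⟩
    · exact ⟨d, fun v _ ↦ hquot hab v⟩

theorem mem_flagF_one_iff (hc : (u c : ℕ) = 0) {v : Fin n → E} :
    v ∈ flagF E β u 1 ↔ ∀ i, β i ≠ c → v i = 0 := by
  have hle (i : Fin n) : 1 ≤ (u (β i) : ℕ) ↔ β i ≠ c := by
    rw [Nat.one_le_iff_ne_zero, ← hc, Ne, Fin.val_inj, u.apply_eq_iff_eq]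
  simp only [mem_flagF_iff, hle]

theorem apply_eq_zero_of_mem_stabSub_flagF_one (hc : (u c : ℕ) = 0)
    (hM : M ∈ stabSub E (flagF E β u 1)) {i j : Fin n} (hi : β i ≠ c) (hj : β j = c) :
    M i j = 0 := by
  have hsingle : Pi.single j 1 ∈ flagF E β u 1 :=
    Submodule.subset_span ⟨j, by simp [hj, hc], rfl⟩
  simpa using (mem_flagF_one_iff hc).mp (hM _ hsingle) i hi

theorem exists_blockProj_mul_mul_blockProj_eq_smul (hM : M ∈ tauFull E β u) (c : Fin s) :
    ∃ t : E, blockProj E β c * M * blockProj E β c = t • blockProj E β c := by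
  obtain ⟨t, ht⟩ := (Submodule.mem_iInf _).mp hM.2 (u c)
  refine ⟨t, ?_⟩
  ext i j
  by_cases hi : β i = c
  · by_cases hj : β j = c
    · have hsingle : Pi.single j 1 ∈ flagF E β u ((u c : ℕ) + 1) :=
        Submodule.subset_span ⟨j, by simp [hj], rfl⟩
      have hentry := mem_flagF_iff.mp (ht _ hsingle) i (by rw [hi])
      simpa [blockProj, hi, hj, diagonal_apply, Pi.single_apply, sub_eq_zero] using hentry
    · have hij : i ≠ j := fun h ↦ hj (h ▸ hi)
      simp [blockProj, hj, hij]
  · simp [blockProj, hi, diagonal_apply]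

theorem mem_tauStep_one_of_blockProj_mul_eq (hc : (u c : ℕ) = 0) (hM : blockProj E β c * M = M)
    {t : E} (ht : M * blockProj E β c = t • blockProj E β c) : M ∈ tauStep E β u 1 := by
  have hflag {v} : v ∈ flagF E β u 1 ↔ blockProj E β c *ᵥ v = v :=
    (mem_flagF_one_iff hc).trans blockProj_mulVec_eq_self_iff.symm
  have hrange (v) : M *ᵥ v ∈ flagF E β u 1 := by
    rw [hflag, mulVec_mulVec, hM]
  refine ⟨⟨fun v _ ↦ hrange v, t, fun v hv ↦ ?_⟩, 0, fun v _ ↦ by simpa using hrange v⟩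
  rw [hflag] at hv
  rw [Submodule.mem_bot, sub_eq_zero, ← hv, mulVec_mulVec, ht, smul_mulVec]

theorem blockProj_mul_mem_tauStep_one {v : Equiv.Perm (Fin s)} (hM : M ∈ tauFull E β u)
    (hc : (v c : ℕ) = 0) : blockProj E β c * M ∈ tauStep E β v 1 := by
  obtain ⟨t, ht⟩ := exists_blockProj_mul_mul_blockProj_eq_smul hM c
  exact mem_tauStep_one_of_blockProj_mul_eq hc (by rw [← Matrix.mul_assoc, blockProj_mul_self]) ht

theorem iSup_tauStep_inf_eq_iSup_tauFull_inf {W : Submodule E (Matrix (Fin n) (Fin n) E)}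
    (hW : ∀ c, ∀ M ∈ W, blockProj E β c * M ∈ W) :
    (⨆ u : Equiv.Perm (Fin s), ⨆ a : Fin s, (tauStep E β u ((a : ℕ) + 1) ⊓ W))
      = ⨆ u : Equiv.Perm (Fin s), (tauFull E β u ⊓ W) := by
  refine le_antisymm
    (iSup_mono fun u ↦ iSup_le fun a ↦ inf_le_inf_right _ (tauStep_le_tauFull _))
    (iSup_le fun u M hM ↦ ?_)
  rw [← Matrix.one_mul M, ← sum_blockProj β, Finset.sum_mul]
  refine Submodule.sum_mem _ fun c _ ↦ ?_
  let first : Fin s := ⟨0, c.pos⟩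
  have hswap : (Equiv.swap c first c : ℕ) = 0 := by simp [first]
  exact Submodule.mem_iSup_of_mem (Equiv.swap c first) <| Submodule.mem_iSup_of_mem first
    ⟨blockProj_mul_mem_tauStep_one hM.1 hswap, hW c M hM.2⟩

end Flag

theorem statement_5_general {E : Type*} [Field E] {n s : ℕ} (β : Fin n → Fin s)
    (σ : Equiv.Perm (Fin n)) {g : Matrix (Fin n) (Fin n) E} (hg : IsUnit g.det)
    (hfac : ∀ c : Fin s, ∃ h B : Matrix (Fin n) (Fin n) E,
      (∀ i j, β i ≠ c → β j = c → h i j = 0) ∧ B ∈ upperTri E n ∧ g = h * σ.permMatrix E * B) :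
    (⨆ u : Equiv.Perm (Fin s), ⨆ a : Fin s,
        (tauStep E β u ((a : ℕ) + 1) ⊓ adConj g (upperTri E n)))
      = ⨆ u : Equiv.Perm (Fin s), (tauFull E β u ⊓ adConj g (upperTri E n)) := by
  simp only [mem_upperTri_iff] at hfac
  obtain ⟨T, hT, hTdet, hgT⟩ := exists_isUpperTriangular_mul_homogeneous_columns β σ hg hfac
  exact iSup_tauStep_inf_eq_iSup_tauFull_inf fun c _ hM ↦
    mul_mem_adConj_upperTri hg (blockProj_mem_adConj_upperTri hg hT hTdet hgT c) hM

/-- Suppose `g ∈ GL_n(E)` is non-critical, meaning that for every permutation `u`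
of `{1,…,s}` there exist a matrix `h_u ∈ GL_n(E)` stabilizing every subspace `F^u_a` and an
invertible upper-triangular matrix `β_u` with `g = h_u w₀ β_u`.  Then
`Σ_{u ∈ S_s} Σ_{a=1}^{s} (τ^u_a ∩ Ad_g(𝔟)) = Σ_{u ∈ S_s} (τ^u ∩ Ad_g(𝔟))` as `E`-subspaces of
`M_n(E)`.  (Here `a : Fin s` corresponds to the paper's index `a + 1 ∈ {1,…,s}`.) -/
theorem statement_5 (E : Type*) [Field E] (n s : ℕ) (hs : 1 ≤ s)
    (β : Fin n → Fin s) (hβmono : Monotone β) (hβsurj : Function.Surjective β)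
    (g : Matrix (Fin n) (Fin n) E)
    (hg : ∀ u : Equiv.Perm (Fin s),
      ∃ hu βu : Matrix (Fin n) (Fin n) E,
        IsUnit hu.det ∧
        (∀ a : ℕ, ∀ v ∈ flagF E β u a, hu.mulVec v ∈ flagF E β u a) ∧
        IsUnit βu.det ∧ βu ∈ upperTri E n ∧ g = hu * w0Mat E n * βu) :
    (⨆ u : Equiv.Perm (Fin s), ⨆ a : Fin s,
        (tauStep E β u ((a : ℕ) + 1) ⊓ adConj g (upperTri E n)))
      = ⨆ u : Equiv.Perm (Fin s), (tauFull E β u ⊓ adConj g (upperTri E n)) := by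
  have hgdet : IsUnit g.det := by
    obtain ⟨h, B, hh, -, hB, -, rfl⟩ := hg 1
    simpa only [det_mul] using (hh.mul isUnit_det_w0Mat).mul hB
  refine statement_5_general β Fin.revPerm hgdet fun c ↦ ?_
  obtain ⟨h, B, -, hh, -, hB, hfac⟩ := hg (Equiv.swap c ⟨0, hs⟩)
  exact ⟨h, B, fun _ _ ↦ apply_eq_zero_of_mem_stabSub_flagF_one (by simp) (hh 1), hB,
    w0Mat_eq_permMatrix (E := E) ▸ hfac⟩
end
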